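/- arXiv:2202.13697 — 2 statements merged into one kernel-verified Lean document; each statement's English description precedes it below -/
import Mathlib

section
/- Let A be a unital C*-algebra containing elements u, v with u*u = v*v = uu* + vv* = 1 and u*v = v*u = 0, and let n ≥ 2. Equip Aⁿ and A^{n−1} with the supremum norm ‖(b_i)_i‖ := max_i ‖b_i‖, and define the bounded linear operator T : Aⁿ → A^{n−1} by T(b_1, …, b_n) := ([v, b_i] + [u, b_{i−1}])_{i=2}^{n}. Then T has a linear right inverse R : A^{n−1} → Aⁿ (i.e. T∘R = id on A^{n−1}) satisfying ‖R b‖ ≤ 8·√2·n²·‖b‖ for all b ∈ A^{n−1}. -/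
/-!
The map `S` sending `y` to `-(y_{i-1} v* + y_i u*) / 2` (with zero boundary values) inverts `T` up
to a remainder: `T ∘ S = 1 - E`, because the terms of `T (S y)` with `u` or `v` on the right add up
to `y`. Since `u` and `v` have orthogonal ranges,
`‖(E y)_k‖² ≤ (‖y_{k-1}‖² + 2 ‖y_k‖² + ‖y_{k+1}‖²) / 4`, so the squared norms along the iterates of
`E` are dominated by a lazy random walk on `{1, …, n - 1}` killed at `0` and `n`. The parabola
`2 - (k / n)²` is contracted by that walk, which makes `‖E ^ k‖` decay geometrically, and
`S ∘ ∑ E ^ k` is the required right inverse.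
-/

open Real

theorem exists_one_sub_mul_eq_one_of_norm_pow_le {R : Type*} [NormedRing R] [CompleteSpace R]
    {x : R} {g : ℕ → ℝ} {a : ℝ} (hg : HasSum g a) (hx : ∀ k, ‖x ^ k‖ ≤ g k) :
    ∃ y, (1 - x) * y = 1 ∧ ‖y‖ ≤ a :=
  ⟨∑' k, x ^ k, (Summable.of_norm_bounded hg.summable hx).one_sub_mul_tsum_pow,
    tsum_of_norm_bounded hg hx⟩

section Isometries

variable {A : Type*} [NormedRing A] [StarRing A] [CStarRing A] {u v : A}

theorem norm_sq_mul_add_mul_le (huu : star u * u = 1) (hvv : star v * v = 1)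
    (huv : star u * v = 0) (a b : A) : ‖v * a + u * b‖ ^ 2 ≤ ‖a‖ ^ 2 + ‖b‖ ^ 2 := by
  have hvu : star v * u = 0 := by simpa using congrArg star huv
  have gram : star (v * a + u * b) * (v * a + u * b) = star a * a + star b * b :=
    calc
      _ = star a * (star v * v) * a + star a * (star v * u) * b
          + star b * (star u * v) * a + star b * (star u * u) * b := by
        simp only [star_add, star_mul]; noncomm_ring
      _ = star a * a + star b * b := by simp [huu, hvv, huv, hvu]
  calc ‖v * a + u * b‖ ^ 2 = ‖star a * a + star b * b‖ := by
        rw [← gram, CStarRing.norm_star_mul_self, sq]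
    _ ≤ ‖star a * a‖ + ‖star b * b‖ := norm_add_le _ _
    _ = ‖a‖ ^ 2 + ‖b‖ ^ 2 := by simp only [CStarRing.norm_star_mul_self, sq]

theorem norm_sq_mul_star_add_mul_star_le (huu : star u * u = 1) (hvv : star v * v = 1)
    (huv : star u * v = 0) (a b : A) : ‖a * star v + b * star u‖ ^ 2 ≤ ‖a‖ ^ 2 + ‖b‖ ^ 2 := by
  simpa [← norm_star (a * star v + b * star u)]
    using norm_sq_mul_add_mul_le huu hvv huv (star a) (star b)

end Isometries

/-- The operator `T (b_0, …, b_m) = ([v, b_{j+1}] + [u, b_j])_{0 ≤ j < m}`, on tuples indexed from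
zero; in terms of the length `n` of the input tuple, `m = n - 1`. -/
def commutatorOperator (𝕜 : Type*) {A : Type*} [NormedField 𝕜] [NormedRing A] [NormedAlgebra 𝕜 A]
    (u v : A) (m : ℕ) : (Fin (m + 1) → A) →L[𝕜] (Fin m → A) where
  toFun b j := (v * b j.succ - b j.succ * v) + (u * b j.castSucc - b j.castSucc * u)
  map_add' a b := by ext j; simp only [Pi.add_apply]; noncomm_ring
  map_smul' c b := by
    ext j
    simp only [Pi.smul_apply, mul_smul_comm, smul_mul_assoc, smul_add, smul_sub, RingHom.id_apply]
  cont := by fun_prop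

theorem commutatorOperator_apply {𝕜 A : Type*} [NormedField 𝕜] [NormedRing A] [NormedAlgebra 𝕜 A]
    (u v : A) {m : ℕ} (b : Fin (m + 1) → A) (j : Fin m) :
    commutatorOperator 𝕜 u v m b j =
      (v * b j.succ - b j.succ * v) + (u * b j.castSucc - b j.castSucc * u) :=
  rfl

namespace commutatorOperator

/-- The parabola `2 - (k / (m + 1))²`, the weight in which the iterates of `remainder` are measured.
The constant `2` keeps it between `1` and `2` on `0, …, m + 1`. -/
noncomputable def parabola (m k : ℕ) : ℝ := 2 - (k / (m + 1)) ^ 2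

/-- A rate of geometric decay for the norms of the powers of `remainder`. -/
noncomputable def decayRate (m : ℕ) : ℝ := 1 - 1 / (8 * (m + 1) ^ 2)

theorem one_le_parabola {m k : ℕ} (hk : k ≤ m + 1) : 1 ≤ parabola m k := by
  have hle : (k : ℝ) / (m + 1) ≤ 1 := div_le_one_of_le₀ (by exact_mod_cast hk) (by positivity)
  have hsq : ((k : ℝ) / (m + 1)) ^ 2 ≤ 1 := pow_le_one₀ (by positivity) hle
  unfold parabola
  linarith

theorem parabola_le_two (m k : ℕ) : parabola m k ≤ 2 :=
  sub_le_self _ (by positivity)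

theorem parabola_add_le {m k : ℕ} (hk : k ≤ m) :
    parabola m k + 2 * parabola m (k + 1) + parabola m (k + 2) ≤
      4 * decayRate m ^ 2 * parabola m (k + 1) := by
  have hpos : 0 ≤ parabola m (k + 1) := zero_le_one.trans (one_le_parabola (by lia))
  calc _ = 4 * parabola m (k + 1) - 2 / (m + 1) ^ 2 := by
        simp only [parabola]; push_cast; field
    _ ≤ 4 * parabola m (k + 1) - parabola m (k + 1) / (m + 1) ^ 2 := by
        gcongr; exact parabola_le_two m (k + 1)
    _ ≤ 4 * parabola m (k + 1) - parabola m (k + 1) / (m + 1) ^ 2 +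
          parabola m (k + 1) / (4 * (m + 1) ^ 2) ^ 2 :=
        le_add_of_nonneg_right (by positivity)
    _ = 4 * decayRate m ^ 2 * parabola m (k + 1) := by
        simp only [decayRate]; field

theorem decayRate_nonneg (m : ℕ) : 0 ≤ decayRate m := by
  have : (1 : ℝ) ≤ (m + 1) ^ 2 := one_le_pow₀ (by simp)
  exact sub_nonneg.2 (div_le_one_of_le₀ (by linarith) (by positivity))

theorem hasSum_decayRate_pow (m : ℕ) : HasSum (decayRate m ^ ·) (8 * (m + 1) ^ 2 : ℝ) := by
  have hlt : decayRate m < 1 := sub_lt_self 1 (by positivity)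
  simpa [decayRate] using hasSum_geometric_of_lt_one (decayRate_nonneg m) hlt

variable (𝕜 : Type*) {A : Type*} [RCLike 𝕜] [NormedRing A] [StarRing A] [NormedAlgebra 𝕜 A]
  (u v : A)

/-- The approximate right inverse `S` of `commutatorOperator`: tuples indexed by `1, …, m` go to
`(S y)_i = -(y_i v* + y_{i+1} u*) / 2` for `0 ≤ i ≤ m`, where `y_0 = y_{m+1} = 0`. With the
zero-based indices of `Fin`, the tuples `(y_i)_i` and `(y_{i+1})_i` are `Fin.cons 0 y` and
`Fin.snoc y 0`. -/
def approxRightInverse (m : ℕ) : (Fin m → A) →L[𝕜] (Fin (m + 1) → A) where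
  toFun y i := -(2⁻¹ : 𝕜) •
    ((Fin.cons 0 y : Fin (m + 1) → A) i * star v + (Fin.snoc y 0 : Fin (m + 1) → A) i * star u)
  map_add' x y := by
    have hcons : (Fin.cons 0 (x + y) : Fin (m + 1) → A) = Fin.cons 0 x + Fin.cons 0 y := by
      ext i; cases i using Fin.cases <;> simp
    have hsnoc : (Fin.snoc (x + y) 0 : Fin (m + 1) → A) = Fin.snoc x 0 + Fin.snoc y 0 := by
      ext i; cases i using Fin.lastCases <;> simp
    ext i
    simp only [hcons, hsnoc, Pi.add_apply]
    rw [← smul_add]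
    noncomm_ring
  map_smul' c y := by
    have hcons : (Fin.cons 0 (c • y) : Fin (m + 1) → A) = c • Fin.cons 0 y := by
      ext i; cases i using Fin.cases <;> simp
    have hsnoc : (Fin.snoc (c • y) 0 : Fin (m + 1) → A) = c • Fin.snoc y 0 := by
      ext i; cases i using Fin.lastCases <;> simp
    ext i
    simp only [hcons, hsnoc, Pi.smul_apply, smul_mul_assoc, ← smul_add, RingHom.id_apply]
    exact smul_comm _ _ _
  cont := by fun_prop

theorem approxRightInverse_apply {m : ℕ} (y : Fin m → A) (i : Fin (m + 1)) :
    approxRightInverse 𝕜 u v m y i = -(2⁻¹ : 𝕜) •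
      ((Fin.cons 0 y : Fin (m + 1) → A) i * star v +
        (Fin.snoc y 0 : Fin (m + 1) → A) i * star u) := rfl

/-- The error `E = 1 - T ∘ S` of the approximate right inverse. -/
def remainder (m : ℕ) : (Fin m → A) →L[𝕜] (Fin m → A) :=
  1 - commutatorOperator 𝕜 u v m ∘L approxRightInverse 𝕜 u v m

theorem comp_approxRightInverse (m : ℕ) :
    commutatorOperator 𝕜 u v m ∘L approxRightInverse 𝕜 u v m = 1 - remainder 𝕜 u v m :=
  (sub_sub_cancel _ _).symm

variable {u v}

theorem remainder_apply {m : ℕ} (huu : star u * u = 1) (hvv : star v * v = 1)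
    (huv : star u * v = 0) (y : Fin m → A) (j : Fin m) :
    remainder 𝕜 u v m y j = -(v * approxRightInverse 𝕜 u v m y j.succ +
      u * approxRightInverse 𝕜 u v m y j.castSucc) := by
  have hvu : star v * u = 0 := by simpa using congrArg star huv
  have hsucc : approxRightInverse 𝕜 u v m y j.succ * v = -(2⁻¹ : 𝕜) • y j := by
    simp [approxRightInverse_apply, add_mul, mul_assoc, hvv, huv]
  have hcastSucc : approxRightInverse 𝕜 u v m y j.castSucc * u = -(2⁻¹ : 𝕜) • y j := by
    simp [approxRightInverse_apply, add_mul, mul_assoc, huu, hvu]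
  have hT : remainder 𝕜 u v m y j =
      y j - commutatorOperator 𝕜 u v m (approxRightInverse 𝕜 u v m y) j := rfl
  rw [hT, commutatorOperator_apply, hsucc, hcastSucc]
  module

section Norm

variable [CStarRing A] {m : ℕ}

theorem norm_sq_approxRightInverse_apply_le (huu : star u * u = 1) (hvv : star v * v = 1)
    (huv : star u * v = 0) {c : ℕ → ℝ} (hc₀ : 0 ≤ c 0) (hc₁ : 0 ≤ c (m + 1)) {y : Fin m → A}
    (hy : ∀ j : Fin m, ‖y j‖ ^ 2 ≤ c (j + 1)) (i : Fin (m + 1)) :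
    ‖approxRightInverse 𝕜 u v m y i‖ ^ 2 ≤ (c i + c (i + 1)) / 4 := by
  have hcons : ‖(Fin.cons 0 y : Fin (m + 1) → A) i‖ ^ 2 ≤ c i := by
    cases i using Fin.cases with
    | zero => simpa using hc₀
    | succ j => simpa using hy j
  have hsnoc : ‖(Fin.snoc y 0 : Fin (m + 1) → A) i‖ ^ 2 ≤ c (i + 1) := by
    cases i using Fin.lastCases with
    | last => simpa using hc₁
    | cast j => simpa using hy j
  have hrow := norm_sq_mul_star_add_mul_star_le huu hvv huv
    ((Fin.cons 0 y : Fin (m + 1) → A) i) ((Fin.snoc y 0 : Fin (m + 1) → A) i)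
  have hnorm : ‖-(2⁻¹ : 𝕜)‖ ^ 2 = 1 / 4 := by
    rw [norm_neg, norm_inv, RCLike.norm_ofNat]; norm_num
  rw [approxRightInverse_apply, norm_smul, mul_pow, hnorm]
  linarith

theorem norm_sq_remainder_apply_le (huu : star u * u = 1) (hvv : star v * v = 1)
    (huv : star u * v = 0) {c : ℕ → ℝ} (hc₀ : 0 ≤ c 0) (hc₁ : 0 ≤ c (m + 1)) {y : Fin m → A}
    (hy : ∀ j : Fin m, ‖y j‖ ^ 2 ≤ c (j + 1)) (j : Fin m) :
    ‖remainder 𝕜 u v m y j‖ ^ 2 ≤ (c j + 2 * c (j + 1) + c (j + 2)) / 4 := by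
  have hS := norm_sq_approxRightInverse_apply_le 𝕜 huu hvv huv hc₀ hc₁ hy
  have hsucc := hS j.succ
  have hcastSucc := hS j.castSucc
  rw [Fin.val_succ] at hsucc
  rw [Fin.val_castSucc] at hcastSucc
  rw [remainder_apply 𝕜 huu hvv huv, norm_neg]
  linarith [norm_sq_mul_add_mul_le huu hvv huv (approxRightInverse 𝕜 u v m y j.succ)
    (approxRightInverse 𝕜 u v m y j.castSucc)]

theorem norm_sq_remainder_pow_apply_le (huu : star u * u = 1) (hvv : star v * v = 1)
    (huv : star u * v = 0) {c : ℕ → ℝ} {q : ℝ} (hc₀ : 0 ≤ c 0) (hc₁ : 0 ≤ c (m + 1))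
    (hc : ∀ k < m, c k + 2 * c (k + 1) + c (k + 2) ≤ 4 * q ^ 2 * c (k + 1)) {y : Fin m → A}
    (hy : ∀ j : Fin m, ‖y j‖ ^ 2 ≤ c (j + 1)) (k : ℕ) (j : Fin m) :
    ‖(remainder 𝕜 u v m ^ k) y j‖ ^ 2 ≤ (q ^ k) ^ 2 * c (j + 1) := by
  induction k generalizing j with
  | zero => simpa using hy j
  | succ k ih =>
    rw [pow_succ' (remainder 𝕜 u v m), mul_apply_eq_comp]
    calc _ ≤ ((q ^ k) ^ 2 * c j + 2 * ((q ^ k) ^ 2 * c (j + 1)) + (q ^ k) ^ 2 * c (j + 2)) / 4 :=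
          norm_sq_remainder_apply_le 𝕜 huu hvv huv (c := fun i => (q ^ k) ^ 2 * c i)
            (by positivity) (by positivity) ih j
      _ = (q ^ k) ^ 2 * ((c j + 2 * c (j + 1) + c (j + 2)) / 4) := by ring
      _ ≤ (q ^ k) ^ 2 * (q ^ 2 * c (j + 1)) := by
          gcongr
          linarith [hc j j.2]
      _ = (q ^ (k + 1)) ^ 2 * c (j + 1) := by ring

theorem norm_approxRightInverse_le (huu : star u * u = 1) (hvv : star v * v = 1)
    (huv : star u * v = 0) : ‖approxRightInverse 𝕜 u v m‖ ≤ √2 / 2 := by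
  refine ContinuousLinearMap.opNorm_le_bound _ (by positivity) fun y => ?_
  refine (pi_norm_le_iff_of_nonneg (by positivity)).2 fun i => ?_
  refine (sq_le_sq₀ (norm_nonneg _) (by positivity)).1 ?_
  calc ‖approxRightInverse 𝕜 u v m y i‖ ^ 2 ≤ (‖y‖ ^ 2 + ‖y‖ ^ 2) / 4 :=
        norm_sq_approxRightInverse_apply_le 𝕜 huu hvv huv (c := fun _ => ‖y‖ ^ 2)
          (by positivity) (by positivity) (fun j => by gcongr; exact norm_le_pi_norm y j) i
    _ = (√2 / 2 * ‖y‖) ^ 2 := by rw [mul_pow, div_pow, sq_sqrt zero_le_two]; ring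

theorem norm_remainder_pow_le (huu : star u * u = 1) (hvv : star v * v = 1)
    (huv : star u * v = 0) (k : ℕ) : ‖remainder 𝕜 u v m ^ k‖ ≤ √2 * decayRate m ^ k := by
  have hq := decayRate_nonneg m
  refine ContinuousLinearMap.opNorm_le_bound _ (by positivity) fun y => ?_
  refine (pi_norm_le_iff_of_nonneg (by positivity)).2 fun j => ?_
  refine (sq_le_sq₀ (norm_nonneg _) (by positivity)).1 ?_
  let c (i : ℕ) : ℝ := ‖y‖ ^ 2 * parabola m i
  have hc_nonneg {i : ℕ} (hi : i ≤ m + 1) : 0 ≤ c i :=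
    mul_nonneg (sq_nonneg _) (zero_le_one.trans (one_le_parabola hi))
  have hc_contract (i : ℕ) (hi : i < m) :
      c i + 2 * c (i + 1) + c (i + 2) ≤ 4 * decayRate m ^ 2 * c (i + 1) := by
    linear_combination ‖y‖ ^ 2 * parabola_add_le hi.le
  have hy (j : Fin m) : ‖y j‖ ^ 2 ≤ c (j + 1) :=
    calc ‖y j‖ ^ 2 ≤ ‖y‖ ^ 2 := by gcongr; exact norm_le_pi_norm y j
      _ ≤ ‖y‖ ^ 2 * parabola m (j + 1) :=
        le_mul_of_one_le_right (sq_nonneg _) (one_le_parabola (by lia))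
  calc ‖(remainder 𝕜 u v m ^ k) y j‖ ^ 2 ≤ (decayRate m ^ k) ^ 2 * c (j + 1) :=
        norm_sq_remainder_pow_apply_le 𝕜 huu hvv huv (hc_nonneg (by lia)) (hc_nonneg le_rfl)
          hc_contract hy k j
    _ ≤ (decayRate m ^ k) ^ 2 * (‖y‖ ^ 2 * 2) := by
        unfold c; gcongr; exact parabola_le_two m (j + 1)
    _ = (√2 * decayRate m ^ k * ‖y‖) ^ 2 := by
        rw [mul_pow, mul_pow, sq_sqrt zero_le_two]; ring

end Norm

end commutatorOperator

open commutatorOperator in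
theorem commutator_operator_right_inverse_general {𝕜 A : Type*} [RCLike 𝕜] [NormedRing A]
    [StarRing A] [CStarRing A] [NormedAlgebra 𝕜 A] [CompleteSpace A] {u v : A}
    (huu : star u * u = 1) (hvv : star v * v = 1) (huv : star u * v = 0) (m : ℕ) :
    ∃ R : (Fin m → A) →L[𝕜] (Fin (m + 1) → A),
      commutatorOperator 𝕜 u v m ∘L R = .id 𝕜 (Fin m → A) ∧ ‖R‖ ≤ 8 * (m + 1) ^ 2 := by
  obtain ⟨G, hG, hG_norm⟩ := exists_one_sub_mul_eq_one_of_norm_pow_le (x := remainder 𝕜 u v m)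
    ((hasSum_decayRate_pow m).mul_left √2) (norm_remainder_pow_le 𝕜 huu hvv huv)
  refine ⟨approxRightInverse 𝕜 u v m ∘L G, ?_, ?_⟩
  · rw [← ContinuousLinearMap.comp_assoc, comp_approxRightInverse]
    exact hG
  · calc ‖approxRightInverse 𝕜 u v m ∘L G‖ ≤ ‖approxRightInverse 𝕜 u v m‖ * ‖G‖ :=
          ContinuousLinearMap.opNorm_comp_le _ _
      _ ≤ √2 / 2 * (√2 * (8 * (m + 1) ^ 2)) := by
          gcongr
          exact norm_approxRightInverse_le 𝕜 huu hvv huv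
      _ = √2 ^ 2 / 2 * (8 * (m + 1) ^ 2) := by ring
      _ = 8 * (m + 1) ^ 2 := by rw [sq_sqrt zero_le_two]; ring

/-- Let `A` be a unital C*-algebra containing elements `u, v` with
`u*u = v*v = uu* + vv* = 1` and `u*v = v*u = 0`, and let `n ≥ 2`.  Equip `Aⁿ` and `A^{n-1}` with
the supremum norm.  Then the bounded linear operator
`T : Aⁿ → A^{n-1}`, `T(b_1, …, b_n) = ([v, b_i] + [u, b_{i-1}])_{i=2}^n`, has a linear right
inverse `R` (`T ∘ R = id`) satisfying `‖R b‖ ≤ 8 √2 n² ‖b‖` for all `b`. -/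
theorem commutator_operator_right_inverse
    {A : Type*} [NormedRing A] [StarRing A] [CStarRing A]
    [NormedAlgebra ℂ A] [StarModule ℂ A] [CompleteSpace A]
    (u v : A)
    (huu : star u * u = 1) (hvv : star v * v = 1)
    (hsum : u * star u + v * star v = 1)
    (huv : star u * v = 0) (hvu : star v * u = 0)
    (n : ℕ) (hn : 2 ≤ n) :
    ∃ R : (Fin (n - 1) → A) →ₗ[ℂ] (Fin n → A),
      (∀ (b : Fin (n - 1) → A) (j : Fin (n - 1)),
        (v * R b ⟨j.1 + 1, by have := j.2; omega⟩ -
            R b ⟨j.1 + 1, by have := j.2; omega⟩ * v) +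
        (u * R b ⟨j.1, by have := j.2; omega⟩ -
            R b ⟨j.1, by have := j.2; omega⟩ * u) = b j) ∧
      (∀ b : Fin (n - 1) → A, ‖R b‖ ≤ 8 * Real.sqrt 2 * (n : ℝ) ^ 2 * ‖b‖) := by
  obtain ⟨m, rfl⟩ := Nat.exists_eq_add_of_le' (one_le_two.trans hn)
  obtain ⟨R, hTR, hR⟩ := commutator_operator_right_inverse_general (𝕜 := ℂ) huu hvv huv m
  refine ⟨R.toLinearMap, fun b j => congrFun (DFunLike.congr_fun hTR b) j, fun b => ?_⟩
  calc ‖R b‖ ≤ 8 * 1 * (↑(m + 1) : ℝ) ^ 2 * ‖b‖ := by simpa using R.le_of_opNorm_le hR b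
    _ ≤ 8 * √2 * (↑(m + 1) : ℝ) ^ 2 * ‖b‖ := by gcongr; exact one_le_sqrt.2 one_le_two
end

section
/- Let A be a unital C*-algebra containing elements u, v with u*u = v*v = uu* + vv* = 1 and u*v = v*u = 0. Then there exists a constant C > 0 such that for every real number ε with 0 < ε ≤ 1/2 there exist elements d, x ∈ A satisfying ‖[d, x] − 1‖ ≤ ε and ‖d‖·‖x‖ ≤ C·(log(1/ε))⁵. -/
/-!
With respect to a basis `t 0, …, t m` of `A` over itself, read `A` as matrices over `A`. The
companion matrix `X` of `x ^ (m + 1) = ∑ x ^ i * b i` and the derivation `x ^ i ↦ i * x ^ (i - 1)`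
have commutator `1` except in the last column. Adding diagonal matrices of `v` and `u`, the latter
multiplied by `X`, keeps the error in that column, where the entry in row `i + 1` becomes
`⁅v, b (i + 1)⁆ + ⁅u, b i⁆` plus small terms. For `b i = -(a i * v* + a (i + 1) * u*) / 2` the main
part is `a (i + 1)` minus an average of `a i`, `a (i + 1)`, `a (i + 2)`; it contracts a norm with
concave weights, so an approximate fixed point makes every entry but the top one as small as
desired. The top entry is damped by the factor `2 ^ (-m)` by scaling the basis to
`t i = 2 ^ i * s i` with `s` orthonormal. Since `u` and `v` enter with a factor of order
`(m + 1) ^ 5`, taking `m` of order `log (1 / ε)` gives the bound.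
-/

open Finset

section DualFrame

variable {A : Type*} [Ring A] {m : ℕ} {t τ b : ℕ → A}

/-- The elements `t 0, …, t m` form a basis of `A` as a right `A`-module, and left multiplication
by `τ i` is the `i`-th coordinate. Values at indices above `m` are irrelevant. -/
structure IsDualFrame (m : ℕ) (t τ : ℕ → A) : Prop where
  dual_mul : ∀ i ≤ m, ∀ j ≤ m, τ i * t j = if i = j then 1 else 0
  sum_mul_dual : ∑ i ∈ range (m + 1), t i * τ i = 1

/-- The element whose left multiplication sends the basis vector `t i` of a dual frame to `f i`. -/
def ofColumns (m : ℕ) (τ f : ℕ → A) : A :=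
  ∑ i ∈ range (m + 1), f i * τ i

/-- The companion matrix of `x ^ (m + 1) = ∑ i ≤ m, x ^ i * b i`, with `t i` in the role
of `x ^ i`. -/
def companion (m : ℕ) (t τ b : ℕ → A) : A :=
  ofColumns m τ fun i => if i < m then t (i + 1) else ∑ j ∈ range (m + 1), t j * b j

/-- The derivation `x ^ i ↦ i * x ^ (i - 1)`, with `t i` in the role of `x ^ i`. -/
def derivation (m : ℕ) (t τ : ℕ → A) : A :=
  ofColumns m τ fun i => i • t (i - 1)

/-- The diagonal matrix with all diagonal entries equal to `c`. -/
def diagonalOf (m : ℕ) (t τ : ℕ → A) (c : A) : A :=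
  ofColumns m τ fun i => t i * c

/-- The derivation perturbed by the diagonal matrices of `u` and `v`, to be commuted with the
companion matrix. -/
def twistedDerivation (m : ℕ) (t τ : ℕ → A) (u v : A) (b : ℕ → A) : A :=
  derivation m t τ + diagonalOf m t τ v + companion m t τ b * diagonalOf m t τ u

/-- The sequence `0, b 0, b 1, …`. -/
def rightShift (b : ℕ → A) : ℕ → A
  | 0 => 0
  | i + 1 => b i

/-- The coordinates of the last column of `⁅twistedDerivation, companion⁆ - 1`, its only nonzero
column. -/
def commutatorDefect (m : ℕ) (u v : A) (b : ℕ → A) (i : ℕ) : A :=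
  (i + 1) • b (i + 1) + ⁅v, b i⁆ + ⁅u, rightShift b i⁆ + b i * ⁅u, b m⁆ -
    if i = m then (m + 1 : A) else 0

namespace IsDualFrame

theorem ofColumns_mul (h : IsDualFrame m t τ) (f : ℕ → A) {j : ℕ} (hj : j ≤ m) :
    ofColumns m τ f * t j = f j := by
  rw [ofColumns, sum_mul, sum_eq_single_of_mem j (mem_range_succ_iff.2 hj)]
  · rw [mul_assoc, h.dual_mul j hj j hj, if_pos rfl, mul_one]
  · intro i hi hij
    rw [mul_assoc, h.dual_mul i (mem_range_succ_iff.1 hi) j hj, if_neg hij, mul_zero]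

theorem ext (h : IsDualFrame m t τ) {y z : A} (hyz : ∀ i ≤ m, y * t i = z * t i) : y = z := by
  rw [← mul_one y, ← mul_one z, ← h.sum_mul_dual, mul_sum, mul_sum]
  refine sum_congr rfl fun i hi => ?_
  rw [← mul_assoc, ← mul_assoc, hyz i (mem_range_succ_iff.1 hi)]

theorem companion_mul_of_lt (h : IsDualFrame m t τ) {i : ℕ} (hi : i < m) :
    companion m t τ b * t i = t (i + 1) := by
  rw [companion, h.ofColumns_mul _ hi.le, if_pos hi]

theorem companion_mul_last (h : IsDualFrame m t τ) :
    companion m t τ b * t m = ∑ i ∈ range (m + 1), t i * b i := by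
  rw [companion, h.ofColumns_mul _ le_rfl, if_neg (lt_irrefl m)]

theorem derivation_mul (h : IsDualFrame m t τ) {i : ℕ} (hi : i ≤ m) :
    derivation m t τ * t i = i • t (i - 1) :=
  h.ofColumns_mul _ hi

theorem diagonalOf_mul (h : IsDualFrame m t τ) (c : A) {i : ℕ} (hi : i ≤ m) :
    diagonalOf m t τ c * t i = t i * c :=
  h.ofColumns_mul _ hi

theorem lie_diagonalOf_companion_mul_of_lt (h : IsDualFrame m t τ) (c : A) {i : ℕ} (hi : i < m) :
    ⁅diagonalOf m t τ c, companion m t τ b⁆ * t i = 0 := by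
  rw [Ring.lie_def, sub_mul, mul_assoc, mul_assoc, h.companion_mul_of_lt hi,
    h.diagonalOf_mul c hi.le, ← mul_assoc, h.companion_mul_of_lt hi, h.diagonalOf_mul c hi,
    sub_self]

theorem lie_diagonalOf_companion_mul_last (h : IsDualFrame m t τ) (c : A) :
    ⁅diagonalOf m t τ c, companion m t τ b⁆ * t m = ∑ i ∈ range (m + 1), t i * ⁅c, b i⁆ := by
  rw [Ring.lie_def, sub_mul, mul_assoc, mul_assoc, h.companion_mul_last, h.diagonalOf_mul c le_rfl,
    ← mul_assoc, h.companion_mul_last, mul_sum, sum_mul, ← sum_sub_distrib]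
  refine sum_congr rfl fun i hi => ?_
  rw [← mul_assoc, h.diagonalOf_mul c (mem_range_succ_iff.1 hi), Ring.lie_def, mul_sub, mul_assoc,
    mul_assoc]

theorem lie_derivation_companion_mul_of_lt (h : IsDualFrame m t τ) {i : ℕ} (hi : i < m) :
    ⁅derivation m t τ, companion m t τ b⁆ * t i = t i := by
  rw [Ring.lie_def, sub_mul, mul_assoc, mul_assoc, h.companion_mul_of_lt hi, h.derivation_mul hi,
    h.derivation_mul hi.le, mul_smul_comm]
  cases i with
  | zero => simp
  | succ i =>
    rw [Nat.succ_eq_add_one, Nat.add_sub_cancel, Nat.add_sub_cancel,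
      h.companion_mul_of_lt (by omega), succ_nsmul, add_sub_cancel_left]

theorem lie_derivation_companion_mul_last (h : IsDualFrame m t τ) (hb : b (m + 1) = 0) :
    ⁅derivation m t τ, companion m t τ b⁆ * t m =
      ∑ i ∈ range (m + 1), t i * ((i + 1) • b (i + 1)) - m • t m := by
  have hlast : companion m t τ b * (derivation m t τ * t m) = m • t m := by
    rw [h.derivation_mul le_rfl, mul_smul_comm]
    cases m with
    | zero => simp
    | succ m => rw [Nat.add_sub_cancel, h.companion_mul_of_lt m.lt_succ_self]
  have hfirst : derivation m t τ * (t 0 * b 0) = 0 := by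
    rw [← mul_assoc, h.derivation_mul m.zero_le, zero_smul, zero_mul]
  rw [Ring.lie_def, sub_mul, mul_assoc, mul_assoc, hlast, h.companion_mul_last, mul_sum,
    sum_range_succ', hfirst, add_zero, sum_range_succ, hb, smul_zero, mul_zero, add_zero]
  refine congrArg (· - m • t m) (sum_congr rfl fun i hi => ?_)
  rw [← mul_assoc, h.derivation_mul (by simpa using hi), Nat.add_sub_cancel, smul_mul_assoc,
    mul_smul_comm]

theorem companion_mul_sum (h : IsDualFrame m t τ) (c : ℕ → A) :
    companion m t τ b * ∑ i ∈ range (m + 1), t i * c i =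
      ∑ i ∈ range (m + 1), t i * (rightShift c i + b i * c m) := by
  simp only [mul_add, sum_add_distrib]
  rw [sum_range_succ, mul_add, mul_sum, ← mul_assoc, h.companion_mul_last, sum_mul,
    sum_range_succ' (fun i => t i * rightShift c i), rightShift, mul_zero, add_zero]
  refine congrArg₂ (· + ·) (sum_congr rfl fun i hi => ?_) (sum_congr rfl fun i _ => mul_assoc _ _ _)
  rw [← mul_assoc, h.companion_mul_of_lt (mem_range.1 hi), rightShift]

theorem lie_twistedDerivation_companion_sub_one (h : IsDualFrame m t τ) (hb : b (m + 1) = 0)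
    (u v : A) :
    ⁅twistedDerivation m t τ u v b, companion m t τ b⁆ - 1 =
      (∑ i ∈ range (m + 1), t i * commutatorDefect m u v b i) * τ m := by
  have hlie (N V U X : A) : ⁅N + V + X * U, X⁆ = ⁅N, X⁆ + ⁅V, X⁆ + X * ⁅U, X⁆ := by
    simp only [Ring.lie_def]
    noncomm_ring
  rw [twistedDerivation, hlie]
  refine h.ext fun i hi => ?_
  rw [sub_mul, add_mul, add_mul, one_mul, mul_assoc (companion m t τ b), mul_assoc (∑ i ∈ _, _),
    h.dual_mul m le_rfl i hi]
  obtain hlt | rfl := hi.lt_or_eq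
  · rw [h.lie_derivation_companion_mul_of_lt hlt, h.lie_diagonalOf_companion_mul_of_lt v hlt,
      h.lie_diagonalOf_companion_mul_of_lt u hlt, if_neg hlt.ne']
    simp only [mul_zero, add_zero, sub_self]
  · have hlast : ∑ j ∈ range (i + 1), t j * (if j = i then (i + 1 : A) else 0) =
        i • t i + t i := by
      simp [mul_add, (Nat.cast_commute i (t i)).eq]
    have hshift : rightShift (fun j => ⁅u, b j⁆) = fun j => ⁅u, rightShift b j⁆ := by
      funext j
      cases j <;> simp [rightShift, Ring.lie_def]
    rw [h.lie_derivation_companion_mul_last hb, h.lie_diagonalOf_companion_mul_last,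
      h.lie_diagonalOf_companion_mul_last, h.companion_mul_sum, hshift, if_pos rfl, mul_one]
    simp only [commutatorDefect, mul_sub, sum_sub_distrib, mul_add (t _), sum_add_distrib, hlast]
    abel

end IsDualFrame

end DualFrame

section StarRing

variable {A : Type*} [Ring A] [StarRing A]

theorem star_sum_mul_star_mul_sum_mul_star {ι : Type*} [DecidableEq ι] {I : Finset ι} {f : ι → A}
    (g : ι → A) (hf : ∀ i ∈ I, ∀ j ∈ I, star (f i) * f j = if i = j then 1 else 0) :
    star (∑ i ∈ I, f i * star (g i)) * ∑ i ∈ I, f i * star (g i) = ∑ i ∈ I, g i * star (g i) := by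
  rw [star_sum, sum_mul]
  refine sum_congr rfl fun i hi => ?_
  rw [mul_sum, sum_eq_single_of_mem i hi]
  · rw [star_mul, star_star, mul_assoc, ← mul_assoc (star (f i)), hf i hi i hi, if_pos rfl, one_mul]
  · intro j hj hij
    rw [star_mul, star_star, mul_assoc, ← mul_assoc (star (f i)), hf i hi j hj, if_neg hij.symm,
      zero_mul, mul_zero]

/-- `s 0, …, s m` are isometries with orthogonal ranges summing to the identity. -/
abbrev IsOrthonormalFrame (m : ℕ) (s : ℕ → A) : Prop :=
  IsDualFrame m s fun i => star (s i)

/-- Two isometries with orthogonal ranges. -/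
structure IsOrthogonalIsometryPair (u v : A) : Prop where
  left : star u * u = 1
  right : star v * v = 1
  left_right : star u * v = 0

namespace IsOrthogonalIsometryPair

variable {u v : A}

theorem right_left (h : IsOrthogonalIsometryPair u v) : star v * u = 0 := by
  simpa using congrArg star h.left_right

theorem exists_isOrthonormalFrame (h : IsOrthogonalIsometryPair u v)
    (hsum : u * star u + v * star v = 1) (m : ℕ) : ∃ s : ℕ → A, IsOrthonormalFrame m s := by
  induction m with
  | zero =>
    refine ⟨fun _ => 1, fun i hi j hj => ?_, by simp⟩
    simp [Nat.le_zero.1 hi, Nat.le_zero.1 hj]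
  | succ m ih =>
    obtain ⟨s, hs⟩ := ih
    refine ⟨fun | 0 => u | i + 1 => v * s i, ?_, ?_⟩
    · rintro (_ | i) hi (_ | j) hj
      · simpa using h.left
      · simp [← mul_assoc, h.left_right]
      · simp [mul_assoc, h.right_left]
      · have hvv : star (v * s i) * (v * s j) = star (s i) * s j := by
          rw [star_mul, mul_assoc, ← mul_assoc (star v), h.right, one_mul]
        rw [hvv, hs.dual_mul i (by omega) j (by omega)]
        simp only [Nat.add_right_cancel_iff]
    · have hconj (x : A) : v * x * star (v * x) = v * (x * star x) * star v := by
        simp only [star_mul, mul_assoc]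
      rw [sum_range_succ']
      simp only [hconj]
      rw [← sum_mul, ← mul_sum, hs.sum_mul_dual, mul_one, add_comm, hsum]

end IsOrthogonalIsometryPair

end StarRing

theorem norm_lie_le_two_mul {A : Type*} [NonUnitalSeminormedRing A] (x y : A) :
    ‖⁅x, y⁆‖ ≤ 2 * ‖x‖ * ‖y‖ := by
  rw [Ring.lie_def]
  linarith [norm_sub_le (x * y) (y * x), norm_mul_le x y, norm_mul_le y x, mul_comm ‖x‖ ‖y‖]

section CStarRing

variable {A : Type*} [NormedRing A] [StarRing A] [CStarRing A]

theorem norm_le_one_of_norm_star_mul_self_le_one {x : A} (h : ‖star x * x‖ ≤ 1) : ‖x‖ ≤ 1 := by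
  rw [CStarRing.norm_star_mul_self] at h
  nlinarith [norm_nonneg x]

theorem norm_le_one_of_star_mul_self_eq_one {x : A} (h : star x * x = 1) : ‖x‖ ≤ 1 :=
  norm_le_one_of_norm_star_mul_self_le_one (h ▸ IsStarProjection.norm_le 1 (.one A))

theorem IsOrthonormalFrame.norm_le_one {m : ℕ} {s : ℕ → A}
    (h : IsOrthonormalFrame m s) {i : ℕ} (hi : i ≤ m) : ‖s i‖ ≤ 1 :=
  norm_le_one_of_star_mul_self_eq_one ((h.dual_mul i hi i hi).trans (if_pos rfl))

theorem norm_mul_mul_star_le {p q : A} (hp : ‖p‖ ≤ 1) (hq : ‖q‖ ≤ 1) (x : A) :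
    ‖p * x * star q‖ ≤ ‖x‖ :=
  calc ‖p * x * star q‖ ≤ ‖p‖ * ‖x‖ * ‖star q‖ := norm_mul₃_le
    _ ≤ 1 * ‖x‖ * 1 := by
      rw [norm_star]
      gcongr
    _ = ‖x‖ := by rw [one_mul, mul_one]

theorem sq_norm_add_le_of_star_mul_eq_zero {x y : A} (h : star x * y = 0) :
    ‖x + y‖ ^ 2 ≤ ‖x‖ ^ 2 + ‖y‖ ^ 2 := by
  have h' : star y * x = 0 := by simpa using congrArg star h
  have hxy : star (x + y) * (x + y) = star x * x + star y * y := by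
    rw [star_add, add_mul, mul_add, mul_add, h, h', add_zero, zero_add]
  simp only [sq, ← CStarRing.norm_star_mul_self, hxy]
  exact norm_add_le _ _

theorem sq_norm_add_le_of_mul_star_eq_zero {x y : A} (h : x * star y = 0) :
    ‖x + y‖ ^ 2 ≤ ‖x‖ ^ 2 + ‖y‖ ^ 2 := by
  simpa only [← star_add, norm_star] using
    sq_norm_add_le_of_star_mul_eq_zero (x := star x) (y := star y) (by rwa [star_star])

theorem norm_sum_mul_star_le_one {ι : Type*} [DecidableEq ι] {I : Finset ι} {f g : ι → A}
    (hf : ∀ i ∈ I, ∀ j ∈ I, star (f i) * f j = if i = j then 1 else 0)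
    (hg : ∀ i ∈ I, ∀ j ∈ I, star (g i) * g j = if i = j then 1 else 0) :
    ‖∑ i ∈ I, f i * star (g i)‖ ≤ 1 := by
  have hstar : star (∑ i ∈ I, g i * star (g i)) = ∑ i ∈ I, g i * star (g i) := by
    simp only [star_sum, star_mul, star_star]
  have hproj : IsStarProjection (∑ i ∈ I, g i * star (g i)) := by
    refine ⟨?_, hstar⟩
    have := star_sum_mul_star_mul_sum_mul_star g hg
    rwa [hstar] at this
  apply norm_le_one_of_norm_star_mul_self_le_one
  rw [star_sum_mul_star_mul_sum_mul_star g hf]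
  exact hproj.norm_le

theorem IsOrthogonalIsometryPair.sq_norm_block_le {u v : A} (h : IsOrthogonalIsometryPair u v)
    (x y z w : A) :
    ‖(v * x * star v + v * y * star u) + (u * z * star v + u * w * star u)‖ ^ 2 ≤
      (‖x‖ ^ 2 + ‖y‖ ^ 2) + (‖z‖ ^ 2 + ‖w‖ ^ 2) := by
  have hu := norm_le_one_of_star_mul_self_eq_one h.left
  have hv := norm_le_one_of_star_mul_self_eq_one h.right
  have hrow {p : A} (hp : ‖p‖ ≤ 1) (c d : A) :
      ‖p * c * star v + p * d * star u‖ ^ 2 ≤ ‖c‖ ^ 2 + ‖d‖ ^ 2 := by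
    refine (sq_norm_add_le_of_mul_star_eq_zero ?_).trans (add_le_add ?_ ?_)
    · rw [star_mul, star_star, mul_assoc, ← mul_assoc (star v), h.right_left, zero_mul, mul_zero]
    · gcongr
      exact norm_mul_mul_star_le hp hv c
    · gcongr
      exact norm_mul_mul_star_le hp hu d
  refine (sq_norm_add_le_of_star_mul_eq_zero ?_).trans (add_le_add (hrow hv x y) (hrow hu z w))
  simp only [mul_assoc, ← mul_add, star_mul]
  rw [← mul_assoc (star v), h.right_left, zero_mul, mul_zero]

end CStarRing

theorem IsDualFrame.smul {𝕜 A : Type*} [Field 𝕜] [Ring A] [Algebra 𝕜 A] {m : ℕ} {t τ : ℕ → A}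
    (h : IsDualFrame m t τ) {c : ℕ → 𝕜} (hc : ∀ i, c i ≠ 0) :
    IsDualFrame m (fun i => c i • t i) (fun i => (c i)⁻¹ • τ i) where
  dual_mul i hi j hj := by
    rw [smul_mul_smul_comm, h.dual_mul i hi j hj]
    split_ifs with hij
    · rw [hij, inv_mul_cancel₀ (hc j), one_smul]
    · rw [smul_zero]
  sum_mul_dual := by
    simpa only [smul_mul_smul_comm, mul_inv_cancel₀ (hc _), one_smul] using h.sum_mul_dual

theorem diagonalOf_smul {𝕜 A : Type*} [CommSemiring 𝕜] [Ring A] [Algebra 𝕜 A] {m : ℕ}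
    (t τ : ℕ → A) (K : 𝕜) (c : A) : diagonalOf m t τ (K • c) = K • diagonalOf m t τ c := by
  simp only [diagonalOf, ofColumns, smul_sum, mul_smul_comm, smul_mul_assoc]

section DyadicFrame

variable {A : Type*} [NormedRing A] [StarRing A] [NormedAlgebra ℝ A] {m : ℕ} {s : ℕ → A}

/-- An orthonormal frame rescaled so that a commutator supported in the entry `(0, m)` becomes
exponentially small. -/
noncomputable def dyadicFrame (s : ℕ → A) (i : ℕ) : A := (2 ^ i : ℝ) • s i

/-- The coordinates dual to `dyadicFrame s`. -/
noncomputable def dyadicCoframe (s : ℕ → A) (i : ℕ) : A := (2 ^ i : ℝ)⁻¹ • star (s i)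

theorem dyadicFrame_mul_mul_dyadicCoframe (c : A) (i j : ℕ) :
    dyadicFrame s i * c * dyadicCoframe s j = (2 ^ i / 2 ^ j : ℝ) • (s i * c * star (s j)) := by
  rw [dyadicFrame, dyadicCoframe, smul_mul_assoc, smul_mul_smul_comm, div_eq_mul_inv]

theorem IsOrthonormalFrame.isDualFrame_dyadicFrame (h : IsOrthonormalFrame m s) :
    IsDualFrame m (dyadicFrame s) (dyadicCoframe s) :=
  h.smul fun _ => by positivity

variable [CStarRing A]

theorem IsOrthonormalFrame.norm_dyadicFrame_mul_mul_dyadicCoframe_le (h : IsOrthonormalFrame m s)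
    (c : A) {i j : ℕ} (hi : i ≤ m) (hj : j ≤ m) :
    ‖dyadicFrame s i * c * dyadicCoframe s j‖ ≤ 2 ^ i / 2 ^ j * ‖c‖ := by
  rw [dyadicFrame_mul_mul_dyadicCoframe, norm_smul, Real.norm_of_nonneg (by positivity)]
  gcongr
  exact norm_mul_mul_star_le (h.norm_le_one hi) (h.norm_le_one hj) c

theorem IsOrthonormalFrame.norm_sum_dyadicFrame_mul_dyadicCoframe_le (h : IsOrthonormalFrame m s)
    (c : ℕ → A) :
    ‖(∑ i ∈ range (m + 1), dyadicFrame s i * c i) * dyadicCoframe s m‖ ≤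
      ‖c 0‖ / 2 ^ m + ∑ i ∈ range m, ‖c (i + 1)‖ := by
  rw [sum_mul, sum_range_succ', add_comm]
  refine (norm_add_le _ _).trans (add_le_add ?_ (norm_sum_le_of_le _ fun i hi => ?_))
  · refine (h.norm_dyadicFrame_mul_mul_dyadicCoframe_le _ m.zero_le le_rfl).trans_eq ?_
    rw [pow_zero, one_div_mul_eq_div]
  · have hi : i + 1 ≤ m := mem_range.1 hi
    refine (h.norm_dyadicFrame_mul_mul_dyadicCoframe_le _ hi le_rfl).trans
      (mul_le_of_le_one_left (norm_nonneg _) ?_)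
    exact div_le_one_of_le₀ (pow_le_pow_right₀ one_le_two hi) (by positivity)

theorem IsOrthonormalFrame.norm_diagonalOf_le_one (h : IsOrthonormalFrame m s) {c : A}
    (hc : star c * c = 1) : ‖diagonalOf m (dyadicFrame s) (dyadicCoframe s) c‖ ≤ 1 := by
  have hdual : ∀ i ∈ range (m + 1), ∀ j ∈ range (m + 1),
      star (s i) * s j = if i = j then 1 else 0 := fun i hi j hj =>
    h.dual_mul i (mem_range_succ_iff.1 hi) j (mem_range_succ_iff.1 hj)
  have hsc : ∀ i ∈ range (m + 1), ∀ j ∈ range (m + 1),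
      star (s i * c) * (s j * c) = if i = j then 1 else 0 := fun i hi j hj => by
    rw [star_mul, mul_assoc, ← mul_assoc (star (s i)), hdual i hi j hj]
    split_ifs <;> simp only [one_mul, zero_mul, mul_zero, hc]
  simpa only [diagonalOf, ofColumns, dyadicFrame_mul_mul_dyadicCoframe,
    div_self (pow_ne_zero _ (two_ne_zero' ℝ)), one_smul] using norm_sum_mul_star_le_one hsc hdual

theorem IsOrthonormalFrame.norm_companion_le_three (h : IsOrthonormalFrame m s) {b : ℕ → A}
    (hb : ∀ i, ‖b i‖ ≤ 1 / (m + 1)) :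
    ‖companion m (dyadicFrame s) (dyadicCoframe s) b‖ ≤ 3 := by
  have hshift : ‖∑ i ∈ range m, s (i + 1) * star (s i)‖ ≤ 1 := by
    refine norm_sum_mul_star_le_one (fun i hi j hj => ?_) fun i hi j hj =>
      h.dual_mul i (mem_range.1 hi).le j (mem_range.1 hj).le
    rw [h.dual_mul (i + 1) (mem_range.1 hi) (j + 1) (mem_range.1 hj)]
    simp only [Nat.add_right_cancel_iff]
  have hlow : ∑ i ∈ range m, (if i < m then dyadicFrame s (i + 1) else
        ∑ j ∈ range (m + 1), dyadicFrame s j * b j) * dyadicCoframe s i =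
      (2 : ℝ) • ∑ i ∈ range m, s (i + 1) * star (s i) := by
    rw [smul_sum]
    refine sum_congr rfl fun i hi => ?_
    rw [if_pos (mem_range.1 hi), ← mul_one (dyadicFrame s (i + 1)),
      dyadicFrame_mul_mul_dyadicCoframe, mul_one, pow_succ',
      mul_div_cancel_right₀ _ (by positivity)]
  have hlast : ‖(∑ i ∈ range (m + 1), dyadicFrame s i * b i) * dyadicCoframe s m‖ ≤ 1 := by
    refine (h.norm_sum_dyadicFrame_mul_dyadicCoframe_le b).trans ?_
    calc ‖b 0‖ / 2 ^ m + ∑ i ∈ range m, ‖b (i + 1)‖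
        ≤ 1 / (m + 1) + ∑ i ∈ range m, (1 / (m + 1) : ℝ) :=
          add_le_add ((div_le_self (norm_nonneg _) (one_le_pow₀ one_le_two)).trans (hb 0))
            (sum_le_sum fun i _ => hb (i + 1))
      _ = 1 := by
          rw [sum_const, card_range, nsmul_eq_mul]
          field_simp
          ring
  rw [companion, ofColumns, sum_range_succ, if_neg (lt_irrefl m), hlow]
  refine (norm_add_le _ _).trans ?_
  rw [norm_smul, Real.norm_ofNat]
  linarith

theorem IsOrthonormalFrame.norm_derivation_le (h : IsOrthonormalFrame m s) :
    ‖derivation m (dyadicFrame s) (dyadicCoframe s)‖ ≤ (m + 1) ^ 2 := by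
  have hterm : ∀ i ∈ range (m + 1),
      ‖i • dyadicFrame s (i - 1) * dyadicCoframe s i‖ ≤ m + 1 := fun i hi => by
    have him : i ≤ m := mem_range_succ_iff.1 hi
    have hpow : (2 ^ (i - 1) / 2 ^ i : ℝ) ≤ 1 :=
      div_le_one_of_le₀ (pow_le_pow_right₀ one_le_two (i.sub_le 1)) (by positivity)
    have hentry : ‖dyadicFrame s (i - 1) * dyadicCoframe s i‖ ≤ 1 := by
      have := h.norm_dyadicFrame_mul_mul_dyadicCoframe_le 1 ((i.sub_le 1).trans him) him
      rw [mul_one] at this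
      exact this.trans (mul_le_one₀ hpow (norm_nonneg _) (IsStarProjection.norm_le 1 (.one A)))
    calc ‖i • dyadicFrame s (i - 1) * dyadicCoframe s i‖
        ≤ i * ‖dyadicFrame s (i - 1) * dyadicCoframe s i‖ := by
          rw [smul_mul_assoc]
          exact norm_nsmul_le
      _ ≤ m * 1 := by gcongr
      _ ≤ m + 1 := by linarith
  refine (norm_sum_le_of_le _ hterm).trans_eq ?_
  rw [sum_const, card_range, nsmul_eq_mul, Nat.cast_succ, sq]

end DyadicFrame

section ApproximateFixedPoint

variable {ι E : Type*} [SeminormedAddCommGroup E] {w : ι → ℝ} {r r' : ℝ}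

/-- The ball of radius `r` for the supremum norm with weights `w`. -/
def weightedBox (w : ι → ℝ) (r : ℝ) : Set (ι → E) :=
  {a | ∀ i, ‖a i‖ ≤ w i * r}

theorem add_mem_weightedBox {a a' : ι → E} (ha : a ∈ weightedBox w r)
    (ha' : a' ∈ weightedBox w r') : a + a' ∈ weightedBox w (r + r') := fun i =>
  (norm_add_le_of_le (ha i) (ha' i)).trans_eq (mul_add _ _ _).symm

theorem weightedBox_mono (hw : ∀ i, 0 ≤ w i) (h : r ≤ r') :
    (weightedBox w r : Set (ι → E)) ⊆ weightedBox w r' := fun _ ha i =>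
  (ha i).trans (mul_le_mul_of_nonneg_left h (hw i))

theorem exists_approx_fixedPoint (hw : ∀ i, 0 ≤ w i) {L R : ℝ} (hL : 0 ≤ L) (hL' : L < 1)
    (hR : 0 ≤ R) {Φ : (ι → E) → ι → E} (hΦ0 : Φ 0 ∈ weightedBox w ((1 - L) * R))
    (hΦ : ∀ a ∈ weightedBox w R, ∀ a' ∈ weightedBox w R, ∀ δ, 0 ≤ δ →
      a - a' ∈ weightedBox w δ → Φ a - Φ a' ∈ weightedBox w (L * δ))
    {η : ℝ} (hη : 0 < η) :
    ∃ a ∈ Set.range Φ, a ∈ weightedBox w R ∧ a - Φ a ∈ weightedBox w η := by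
  have hzero : (0 : ι → E) ∈ weightedBox w R := fun i => by
    simpa using mul_nonneg (hw i) hR
  have hmaps (a : ι → E) (ha : a ∈ weightedBox w R) : Φ a ∈ weightedBox w R := by
    have := add_mem_weightedBox (hΦ a ha 0 hzero R hR (by simpa using ha)) hΦ0
    rwa [sub_add_cancel, show L * R + (1 - L) * R = R by ring] at this
  have hmem (k : ℕ) : Φ^[k] 0 ∈ weightedBox w R := Function.Iterate.rec _ hzero hmaps k
  have hstep (k : ℕ) : Φ^[k] 0 - Φ (Φ^[k] 0) ∈ weightedBox w (L ^ k * R) := by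
    induction k with
    | zero => exact fun i => by simpa using hmem 1 i
    | succ k ih =>
      rw [pow_succ', mul_assoc, Function.iterate_succ_apply']
      exact hΦ _ (hmem k) _ (hmaps _ (hmem k)) _ (by positivity) ih
  obtain ⟨k, hk⟩ := exists_pow_lt_of_lt_one (show 0 < η / (R + 1) by positivity) hL'
  rw [lt_div_iff₀ (by positivity)] at hk
  refine ⟨Φ^[k + 1] 0, ⟨Φ^[k] 0, (Function.iterate_succ_apply' Φ k 0).symm⟩, hmem _,
    weightedBox_mono hw ?_ (hstep (k + 1))⟩
  calc L ^ (k + 1) * R ≤ L ^ k * (R + 1) := by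
        gcongr ?_ * ?_
        · exact pow_le_pow_of_le_one hL hL'.le k.le_succ
        · linarith
    _ ≤ η := hk.le

end ApproximateFixedPoint

section Weight

/-- Weights on `{0, …, m + 1}` with concave squares: averaging the squares over `i`, `i + 1` (twice)
and `i + 2` lowers the value at `i + 1` by `1 / (2 * (m + 1) ^ 2)`, so that `blockAverage` contracts
the weighted norm. -/
noncomputable def concaveWeight (m i : ℕ) : ℝ := √(2 - (i / (m + 1)) ^ 2)

variable {m i : ℕ}

theorem concaveWeight_nonneg (m i : ℕ) : 0 ≤ concaveWeight m i := Real.sqrt_nonneg _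

theorem concaveWeight_le_two (m i : ℕ) : concaveWeight m i ≤ 2 := by
  refine Real.sqrt_le_iff.2 ⟨zero_le_two, ?_⟩
  linarith [sq_nonneg (i / (m + 1) : ℝ)]

theorem sq_div_succ_le_one (hi : i ≤ m + 1) : (i / (m + 1) : ℝ) ^ 2 ≤ 1 := by
  refine pow_le_one₀ (by positivity) (div_le_one_of_le₀ ?_ (by positivity))
  exact_mod_cast hi

theorem one_le_concaveWeight (hi : i ≤ m + 1) : 1 ≤ concaveWeight m i := by
  rw [concaveWeight, Real.one_le_sqrt]
  linarith [sq_div_succ_le_one hi]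

theorem sq_concaveWeight (hi : i ≤ m + 1) : concaveWeight m i ^ 2 = 2 - (i / (m + 1) : ℝ) ^ 2 :=
  Real.sq_sqrt (by linarith [sq_div_succ_le_one hi])

theorem sq_concaveWeight_add_two_mul_add_sq_concaveWeight (hi : i < m) :
    concaveWeight m i ^ 2 + 2 * concaveWeight m (i + 1) ^ 2 + concaveWeight m (i + 2) ^ 2 =
      4 * concaveWeight m (i + 1) ^ 2 - 2 / (m + 1) ^ 2 := by
  rw [sq_concaveWeight (by omega), sq_concaveWeight (by omega), sq_concaveWeight (by omega)]
  push_cast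
  field_simp
  ring

theorem sq_concaveWeight_average_le (hi : i < m) :
    (concaveWeight m i ^ 2 + 2 * concaveWeight m (i + 1) ^ 2 + concaveWeight m (i + 2) ^ 2) / 4 ≤
      (concaveWeight m (i + 1) * (1 - 1 / (8 * (m + 1) ^ 2))) ^ 2 := by
  have hw : concaveWeight m (i + 1) ^ 2 ≤ 2 := by
    rw [sq_concaveWeight (by omega)]
    linarith [sq_nonneg ((i + 1 : ℕ) / (m + 1) : ℝ)]
  have hq : (0 : ℝ) < 1 / (m + 1) ^ 2 := by positivity
  rw [sq_concaveWeight_add_two_mul_add_sq_concaveWeight hi, div_eq_mul_one_div (2 : ℝ),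
    ← one_div_mul_one_div, mul_pow]
  nlinarith [mul_le_mul_of_nonneg_right hw hq.le,
    mul_nonneg (sq_nonneg (concaveWeight m (i + 1))) (sq_nonneg (1 / (m + 1 : ℝ) ^ 2))]

theorem norm_le_two_mul_of_mem_weightedBox {E : Type*} [SeminormedAddCommGroup E] {r : ℝ}
    (hr : 0 ≤ r) {a : ℕ → E} (ha : a ∈ weightedBox (concaveWeight m) r) (i : ℕ) : ‖a i‖ ≤ 2 * r :=
  (ha i).trans (mul_le_mul_of_nonneg_right (concaveWeight_le_two m i) hr)

end Weight

section Perturbation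

variable {A : Type*} [NormedRing A] [NormedAlgebra ℝ A] {u : A} {m i : ℕ}

/-- What is left of `-K⁻¹ • commutatorDefect m (K • u) (K • v) b (i + 1)` when the main part
`⁅v, b (i + 1)⁆ + ⁅u, b i⁆` is dropped; it is small when `K` is large and `b` is small. -/
noncomputable def perturbation (u : A) (K : ℝ) (m : ℕ) (b : ℕ → A) (i : ℕ) : A :=
  K⁻¹ • ((if i + 1 = m then (m + 1 : A) else 0) - (i + 2) • b (i + 2)) - b (i + 1) * ⁅u, b m⁆

theorem norm_perturbation_sub_le (hu : ‖u‖ ≤ 1) {K : ℝ} (hK : 0 ≤ K) {b b' : ℕ → A} {r ρ : ℝ}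
    (hb : ∀ i, ‖b i‖ ≤ r) (hb' : ∀ i, ‖b' i‖ ≤ r) (hbb' : ∀ i, ‖b i - b' i‖ ≤ ρ) (hi : i < m) :
    ‖perturbation u K m b i - perturbation u K m b' i‖ ≤ (K⁻¹ * (m + 1) + 4 * r) * ρ := by
  have hlie {x : A} {c : ℝ} (hx : ‖x‖ ≤ c) : ‖⁅u, x⁆‖ ≤ 2 * c := by
    refine (norm_lie_le_two_mul u x).trans ?_
    nlinarith [norm_nonneg x, norm_nonneg u]
  have hlinear : ‖K⁻¹ • ((i + 2) • (b (i + 2) - b' (i + 2)))‖ ≤ K⁻¹ * ((m + 1) * ρ) := by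
    rw [norm_smul, Real.norm_of_nonneg (by positivity)]
    have him : ((i + 2 : ℕ) : ℝ) ≤ m + 1 := by exact_mod_cast Nat.succ_le_succ hi
    gcongr
    refine norm_nsmul_le.trans ?_
    gcongr
    exact hbb' _
  have hquadratic : ‖(b (i + 1) - b' (i + 1)) * ⁅u, b m⁆ + b' (i + 1) * ⁅u, b m - b' m⁆‖ ≤
      ρ * (2 * r) + r * (2 * ρ) :=
    norm_add_le_of_le (norm_mul_le_of_le (hbb' _) (hlie (hb m)))
      (norm_mul_le_of_le (hb' _) (hlie (hbb' m)))
  have hsplit : perturbation u K m b i - perturbation u K m b' i =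
      -(K⁻¹ • ((i + 2) • (b (i + 2) - b' (i + 2)))) -
        ((b (i + 1) - b' (i + 1)) * ⁅u, b m⁆ + b' (i + 1) * ⁅u, b m - b' m⁆) := by
    simp only [perturbation, smul_sub, Ring.lie_def, mul_sub, sub_mul]
    abel
  rw [hsplit]
  refine (norm_sub_le _ _).trans ?_
  rw [norm_neg]
  linarith

end Perturbation

section System

variable {A : Type*} [NormedRing A] [StarRing A] [NormedAlgebra ℝ A] {u v : A} {m i : ℕ}

/-- A change of unknowns `a ↦ b` under which `⁅v, b (i + 1)⁆ + ⁅u, b i⁆` becomes `a (i + 1)` minus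
an average of `a i`, `a (i + 1)`, `a (i + 1)`, `a (i + 2)`. -/
noncomputable def companionCoeff (u v : A) (a : ℕ → A) (i : ℕ) : A :=
  (-(1 / 2) : ℝ) • (a i * star v + a (i + 1) * star u)

/-- The averaging operator in the equation for the unknowns of `companionCoeff`. -/
noncomputable def blockAverage (u v : A) (a : ℕ → A) (i : ℕ) : A :=
  (1 / 2 : ℝ) • ((v * a (i + 1) * star v + v * a (i + 2) * star u) +
    (u * a i * star v + u * a (i + 1) * star u))

/-- The map whose fixed points `a` make `commutatorDefect m (K • u) (K • v) (companionCoeff u v a)`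
vanish at the indices `1, …, m`. -/
noncomputable def picardMap (u v : A) (K : ℝ) (m : ℕ) (a : ℕ → A) : ℕ → A
  | 0 => 0
  | i + 1 => if i < m then blockAverage u v a i + perturbation u K m (companionCoeff u v a) i else 0

theorem companionCoeff_sub (a a' : ℕ → A) (i : ℕ) :
    companionCoeff u v a i - companionCoeff u v a' i = companionCoeff u v (a - a') i := by
  simp only [companionCoeff, Pi.sub_apply, sub_mul]
  module

theorem blockAverage_sub (a a' : ℕ → A) (i : ℕ) :
    blockAverage u v a i - blockAverage u v a' i = blockAverage u v (a - a') i := by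
  simp only [blockAverage, Pi.sub_apply, mul_sub, sub_mul]
  module

theorem IsOrthogonalIsometryPair.lie_companionCoeff_succ_add_lie_companionCoeff
    (h : IsOrthogonalIsometryPair u v) (a : ℕ → A) (i : ℕ) :
    ⁅v, companionCoeff u v a (i + 1)⁆ + ⁅u, companionCoeff u v a i⁆ =
      a (i + 1) - blockAverage u v a i := by
  have hv : companionCoeff u v a (i + 1) * v = (-(1 / 2) : ℝ) • a (i + 1) := by
    simp only [companionCoeff, smul_mul_assoc, add_mul, mul_assoc, h.right, h.left_right, mul_one,
      mul_zero, add_zero]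
  have hu : companionCoeff u v a i * u = (-(1 / 2) : ℝ) • a (i + 1) := by
    simp only [companionCoeff, smul_mul_assoc, add_mul, mul_assoc, h.left, h.right_left, mul_one,
      mul_zero, zero_add]
  rw [Ring.lie_def, Ring.lie_def, hv, hu]
  simp only [companionCoeff, blockAverage, mul_smul_comm, mul_add, mul_assoc]
  module

theorem IsOrthogonalIsometryPair.commutatorDefect_companionCoeff_succ
    (h : IsOrthogonalIsometryPair u v) {K : ℝ} (hK : K ≠ 0) (a : ℕ → A) (hi : i < m) :
    commutatorDefect m (K • u) (K • v) (companionCoeff u v a) (i + 1) =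
      K • (a (i + 1) - picardMap u v K m a (i + 1)) := by
  rw [picardMap, if_pos hi, ← sub_sub, ← h.lie_companionCoeff_succ_add_lie_companionCoeff,
    perturbation]
  simp only [commutatorDefect, rightShift, smul_sub, smul_add, smul_inv_smul₀ hK,
    Ring.lie_def, smul_mul_assoc, mul_smul_comm, mul_sub]
  abel

variable [CStarRing A]

theorem norm_perturbation_zero_le {K : ℝ} (hK : 0 ≤ K) :
    ‖perturbation u K m 0 i‖ ≤ K⁻¹ * (m + 1) := by
  have hcast : ‖(if i + 1 = m then (m + 1 : A) else 0)‖ ≤ m + 1 := by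
    split_ifs
    · refine norm_add_le_of_le ?_ (IsStarProjection.norm_le 1 (.one A))
      exact (Nat.norm_cast_le m).trans
        (mul_le_of_le_one_right m.cast_nonneg (IsStarProjection.norm_le 1 (.one A)))
    · rw [norm_zero]
      positivity
  simp only [perturbation, Pi.zero_apply, smul_zero, zero_mul, sub_zero]
  rw [norm_smul, Real.norm_of_nonneg (by positivity)]
  gcongr

theorem IsOrthogonalIsometryPair.norm_companionCoeff_le (h : IsOrthogonalIsometryPair u v)
    {a : ℕ → A} {r : ℝ} (ha : ∀ i, ‖a i‖ ≤ r) (i : ℕ) : ‖companionCoeff u v a i‖ ≤ r := by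
  have hterm {p : A} (hp : star p * p = 1) (j : ℕ) : ‖a j * star p‖ ≤ r * 1 :=
    norm_mul_le_of_le (ha j) ((norm_star p).trans_le (norm_le_one_of_star_mul_self_eq_one hp))
  rw [companionCoeff, norm_smul, norm_neg, Real.norm_of_nonneg (by norm_num)]
  linarith [norm_add_le_of_le (hterm h.right i) (hterm h.left (i + 1))]

theorem IsOrthogonalIsometryPair.sq_norm_blockAverage_le (h : IsOrthogonalIsometryPair u v)
    (a : ℕ → A) (i : ℕ) :
    ‖blockAverage u v a i‖ ^ 2 ≤ (‖a i‖ ^ 2 + 2 * ‖a (i + 1)‖ ^ 2 + ‖a (i + 2)‖ ^ 2) / 4 := by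
  rw [blockAverage, norm_smul, Real.norm_of_nonneg (by norm_num), mul_pow]
  linarith [h.sq_norm_block_le (a (i + 1)) (a (i + 2)) (a i) (a (i + 1))]

theorem IsOrthogonalIsometryPair.norm_blockAverage_le (h : IsOrthogonalIsometryPair u v)
    {a : ℕ → A} {δ : ℝ} (hδ : 0 ≤ δ) (ha : a ∈ weightedBox (concaveWeight m) δ) (hi : i < m) :
    ‖blockAverage u v a i‖ ≤ concaveWeight m (i + 1) * (1 - 1 / (8 * (m + 1) ^ 2)) * δ := by
  have hq : (0 : ℝ) ≤ 1 - 1 / (8 * (m + 1) ^ 2) := by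
    refine sub_nonneg.2 (div_le_one_of_le₀ ?_ (by positivity))
    nlinarith [m.cast_nonneg (α := ℝ)]
  have hsq (j : ℕ) : ‖a j‖ ^ 2 ≤ concaveWeight m j ^ 2 * δ ^ 2 := by
    rw [← mul_pow]
    exact pow_le_pow_left₀ (norm_nonneg _) (ha j) 2
  refine (sq_le_sq₀ (norm_nonneg _) (mul_nonneg (mul_nonneg (concaveWeight_nonneg m _) hq) hδ)).1 ?_
  calc ‖blockAverage u v a i‖ ^ 2
      ≤ (‖a i‖ ^ 2 + 2 * ‖a (i + 1)‖ ^ 2 + ‖a (i + 2)‖ ^ 2) / 4 := h.sq_norm_blockAverage_le a i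
    _ ≤ (concaveWeight m i ^ 2 + 2 * concaveWeight m (i + 1) ^ 2 +
          concaveWeight m (i + 2) ^ 2) / 4 * δ ^ 2 := by
      linarith [hsq i, hsq (i + 1), hsq (i + 2)]
    _ ≤ (concaveWeight m (i + 1) * (1 - 1 / (8 * (m + 1) ^ 2))) ^ 2 * δ ^ 2 := by
      gcongr
      exact sq_concaveWeight_average_le hi
    _ = _ := (mul_pow _ _ 2).symm

end System

section Solution

variable {A : Type*} [NormedRing A] [StarRing A] [CStarRing A] [NormedAlgebra ℝ A] {u v : A}
  {m : ℕ}

theorem picardMap_zero_mem_weightedBox (u v : A) {K : ℝ} (hK : 0 ≤ K) :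
    picardMap u v K m 0 ∈ weightedBox (concaveWeight m) (K⁻¹ * (m + 1)) := by
  have hcoeff : companionCoeff u v 0 = 0 := by
    funext i
    simp [companionCoeff]
  have hnonneg (j : ℕ) : ‖(0 : A)‖ ≤ concaveWeight m j * (K⁻¹ * (m + 1)) := by
    rw [norm_zero]
    exact mul_nonneg (concaveWeight_nonneg m j) (by positivity)
  rintro (_ | i)
  · exact hnonneg 0
  rw [picardMap]
  split_ifs with hi
  · have haverage : blockAverage u v 0 i = 0 := by simp [blockAverage]
    rw [haverage, zero_add, hcoeff]
    exact (norm_perturbation_zero_le hK).trans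
      (le_mul_of_one_le_left (by positivity) (one_le_concaveWeight (by omega)))
  · exact hnonneg (i + 1)

namespace IsOrthogonalIsometryPair

theorem picardMap_sub_mem_weightedBox (h : IsOrthogonalIsometryPair u v) {K R δ : ℝ} (hK : 0 ≤ K)
    (hR : 0 ≤ R) (hKR : K⁻¹ * (m + 1) + 8 * R ≤ 3 / (64 * (m + 1) ^ 2)) (hδ : 0 ≤ δ)
    {a a' : ℕ → A} (ha : a ∈ weightedBox (concaveWeight m) R)
    (ha' : a' ∈ weightedBox (concaveWeight m) R)
    (haa' : a - a' ∈ weightedBox (concaveWeight m) δ) :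
    picardMap u v K m a - picardMap u v K m a' ∈
      weightedBox (concaveWeight m) ((1 - 1 / (32 * (m + 1) ^ 2)) * δ) := by
  have hq : (0 : ℝ) ≤ 1 - 1 / (32 * (m + 1) ^ 2) := by
    refine sub_nonneg.2 (div_le_one_of_le₀ ?_ (by positivity))
    nlinarith [m.cast_nonneg (α := ℝ)]
  have hnonneg (j : ℕ) : ‖(0 : A)‖ ≤ concaveWeight m j * ((1 - 1 / (32 * (m + 1) ^ 2)) * δ) := by
    rw [norm_zero]
    exact mul_nonneg (concaveWeight_nonneg m j) (mul_nonneg hq hδ)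
  rintro (_ | i)
  · simpa only [Pi.sub_apply, picardMap, sub_self] using hnonneg 0
  rw [Pi.sub_apply, picardMap, picardMap]
  split_ifs with hi
  · have haverage := h.norm_blockAverage_le hδ haa' hi
    have hperturbation := norm_perturbation_sub_le (norm_le_one_of_star_mul_self_eq_one h.left) hK
      (h.norm_companionCoeff_le (norm_le_two_mul_of_mem_weightedBox hR ha))
      (h.norm_companionCoeff_le (norm_le_two_mul_of_mem_weightedBox hR ha'))
      (fun j => (congrArg norm (companionCoeff_sub a a' j)).trans_le
        (h.norm_companionCoeff_le (norm_le_two_mul_of_mem_weightedBox hδ haa') j)) hi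
    rw [add_sub_add_comm, blockAverage_sub]
    refine (norm_add_le_of_le haverage hperturbation).trans ?_
    have hweight := one_le_concaveWeight (m := m) (i := i + 1) (by omega)
    rw [← one_div_mul_one_div, ← one_div_mul_one_div]
    rw [← div_div, div_eq_mul_one_div] at hKR
    have hKRδ := mul_le_mul_of_nonneg_right hKR hδ
    have : 1 * (1 / (m + 1 : ℝ) ^ 2 * δ) ≤ concaveWeight m (i + 1) * (1 / (m + 1 : ℝ) ^ 2 * δ) := by
      gcongr
    linarith
  · simpa only [sub_self] using hnonneg (i + 1)

theorem exists_norm_commutatorDefect_succ_le (h : IsOrthogonalIsometryPair u v) (m : ℕ) {η : ℝ}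
    (hη : 0 < η) :
    ∃ b : ℕ → A, (∀ i, ‖b i‖ ≤ 1 / (128 * (m + 1) ^ 2)) ∧ b (m + 1) = 0 ∧
      ∀ i < m, ‖commutatorDefect m ((8192 * (m + 1) ^ 5 : ℝ) • u) ((8192 * (m + 1) ^ 5 : ℝ) • v)
        b (i + 1)‖ ≤ η := by
  -- `1 - L` and `R` are of order `(m + 1)⁻²`, and the inhomogeneous term `K⁻¹ * (m + 1)` must not
  -- exceed `(1 - L) * R`; this dictates the exponent `5`.
  set K : ℝ := 8192 * (m + 1) ^ 5 with hK
  set R : ℝ := 1 / (256 * (m + 1) ^ 2) with hR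
  set L : ℝ := 1 - 1 / (32 * (m + 1) ^ 2) with hL
  have hK0 : 0 < K := by positivity
  have hR0 : 0 ≤ R := by positivity
  have hn : (1 : ℝ) ≤ (m + 1) ^ 2 := one_le_pow₀ (by linarith [m.cast_nonneg (α := ℝ)])
  have hKn : K⁻¹ * (m + 1) = (1 - L) * R := by
    rw [hK, hL, hR]
    field_simp
    norm_num
  have hL0 : 0 ≤ L := sub_nonneg.2 (div_le_one_of_le₀ (by linarith) (by positivity))
  have hL1 : L < 1 := sub_lt_self 1 (by positivity)
  have hKR : K⁻¹ * (m + 1) + 8 * R ≤ 3 / (64 * (m + 1) ^ 2) := by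
    have : 3 / (64 * (m + 1) ^ 2) = 12 * R := by
      rw [hR]
      field_simp
      norm_num
    linarith [mul_nonneg hL0 hR0]
  obtain ⟨_, ⟨a', rfl⟩, ha, hfix⟩ := exists_approx_fixedPoint (Φ := picardMap u v K m)
    (concaveWeight_nonneg m) hL0 hL1 hR0 (hKn ▸ picardMap_zero_mem_weightedBox u v hK0.le)
    (fun a ha a' ha' δ hδ => h.picardMap_sub_mem_weightedBox hK0.le hR0 hKR hδ ha ha')
    (η := η / (2 * K)) (by positivity)
  refine ⟨companionCoeff u v (picardMap u v K m a'), fun i => ?_, ?_, fun i hi => ?_⟩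
  · refine (h.norm_companionCoeff_le (norm_le_two_mul_of_mem_weightedBox hR0 ha) i).trans_eq ?_
    rw [hR]
    field_simp
    norm_num
  · simp [companionCoeff, picardMap]
  · rw [h.commutatorDefect_companionCoeff_succ hK0.ne' _ hi, norm_smul, Real.norm_of_nonneg hK0.le]
    calc K * ‖_‖ ≤ K * (2 * (η / (2 * K))) := by
          gcongr
          exact norm_le_two_mul_of_mem_weightedBox (by positivity) hfix (i + 1)
      _ = η := by field_simp

end IsOrthogonalIsometryPair

end Solution

theorem exists_nat_mul_pow_div_two_pow_le {c : ℝ} (hc : 0 < c) (p : ℕ) :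
    ∃ C : ℝ, 0 < C ∧ ∀ ε : ℝ, 0 < ε → ε ≤ 1 / 2 →
      ∃ m : ℕ, c * (m + 1) ^ p / 2 ^ m ≤ ε ∧ m + 1 ≤ C * Real.log (1 / ε) := by
  have hexp : Real.exp (1 / 2) < 2 := by
    rw [← Real.lt_log_iff_exp_lt two_pos]
    linarith [Real.log_two_gt_d9]
  have htendsto := (Filter.tendsto_add_atTop_iff_nat 1).2 (tendsto_pow_const_mul_const_pow_of_lt_one
    p (r := Real.exp (1 / 2) / 2) (by positivity) (by linarith))
  obtain ⟨m₀, hm₀⟩ := Filter.eventually_atTop.1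
    (htendsto.eventually (gt_mem_nhds (show 0 < Real.exp (1 / 2) / 2 / c by positivity)))
  have hdecay (m : ℕ) (hm : m₀ ≤ m) : c * (m + 1) ^ p / 2 ^ m ≤ Real.exp (-(m / 2)) := by
    have hlt := hm₀ m hm
    rw [pow_succ, ← mul_assoc, Nat.cast_succ, div_eq_mul_one_div (Real.exp _ / 2),
      mul_comm (Real.exp _ / 2) (1 / c), mul_lt_mul_iff_left₀ (by positivity), div_pow,
      ← Real.exp_nat_mul, mul_one_div, lt_div_iff₀ hc] at hlt
    rw [Real.exp_neg, ← one_div, le_div_iff₀ (Real.exp_pos _)]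
    refine hlt.le.trans_eq' ?_
    ring
  refine ⟨2 * m₀ + 6, by positivity, fun ε hε hε' => ?_⟩
  have hlog : 1 / 2 ≤ Real.log (1 / ε) := by
    refine le_trans ?_ (Real.log_le_log two_pos ((le_one_div two_pos hε).2 hε'))
    linarith [Real.log_two_gt_d9]
  refine ⟨m₀ + ⌈2 * Real.log (1 / ε)⌉₊, (hdecay _ (m₀.le_add_right _)).trans ?_, ?_⟩
  · rw [← Real.le_log_iff_exp_le hε, ← neg_le_neg_iff, neg_neg, ← Real.log_inv, ← one_div]
    push_cast
    linarith [Nat.le_ceil (2 * Real.log (1 / ε)), m₀.cast_nonneg (α := ℝ)]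
  · have := Nat.ceil_lt_add_one (show 0 ≤ 2 * Real.log (1 / ε) by linarith)
    push_cast
    nlinarith [m₀.cast_nonneg (α := ℝ)]

section Assembly

variable {A : Type*} [NormedRing A] [StarRing A] [CStarRing A] [NormedAlgebra ℝ A] {u v : A}
  {m : ℕ}

theorem norm_commutatorDefect_zero_le {K r : ℝ} (hK : 0 ≤ K) (hu : ‖u‖ ≤ 1) (hv : ‖v‖ ≤ 1)
    {b : ℕ → A} (hb : ∀ i, ‖b i‖ ≤ r) :
    ‖commutatorDefect m (K • u) (K • v) b 0‖ ≤ 1 + r + 2 * K * r * (1 + r) := by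
  have hlie {c : A} (hc : ‖c‖ ≤ 1) (i : ℕ) : ‖⁅K • c, b i⁆‖ ≤ 2 * K * r := by
    refine (norm_lie_le_two_mul _ _).trans ?_
    rw [norm_smul, Real.norm_of_nonneg hK]
    have hKc : K * ‖c‖ ≤ K := mul_le_of_le_one_right hK hc
    gcongr
    exact hb i
  have hone : ‖if 0 = m then (m + 1 : A) else 0‖ ≤ 1 := by
    split_ifs with hm
    · subst hm
      simpa using IsStarProjection.norm_le 1 (.one A)
    · simp
  have hsum : ‖b 1 + ⁅K • v, b 0⁆ + b 0 * ⁅K • u, b m⁆ - if 0 = m then (m + 1 : A) else 0‖ ≤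
      r + 2 * K * r + r * (2 * K * r) + 1 :=
    norm_sub_le_of_le (norm_add_le_of_le (norm_add_le_of_le (hb 1) (hlie hv 0))
      (norm_mul_le_of_le (hb 0) (hlie hu m))) hone
  rw [commutatorDefect, rightShift, Ring.lie_def _ (0 : A), mul_zero, zero_mul, sub_zero, add_zero,
    zero_add, one_smul]
  linarith

theorem IsOrthonormalFrame.norm_lie_twistedDerivation_companion_sub_one_le {s : ℕ → A}
    (hs : IsOrthonormalFrame m s) {b : ℕ → A} (hb : b (m + 1) = 0) {η : ℝ}
    (hη : ∀ i < m, ‖commutatorDefect m u v b (i + 1)‖ ≤ η) :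
    ‖⁅twistedDerivation m (dyadicFrame s) (dyadicCoframe s) u v b,
        companion m (dyadicFrame s) (dyadicCoframe s) b⁆ - 1‖ ≤
      ‖commutatorDefect m u v b 0‖ / 2 ^ m + m * η := by
  rw [hs.isDualFrame_dyadicFrame.lie_twistedDerivation_companion_sub_one hb]
  refine (hs.norm_sum_dyadicFrame_mul_dyadicCoframe_le _).trans (add_le_add_right ?_ _)
  refine (sum_le_sum fun i hi => hη i (mem_range.1 hi)).trans_eq ?_
  rw [sum_const, card_range, nsmul_eq_mul]

theorem IsOrthonormalFrame.norm_twistedDerivation_smul_le {s : ℕ → A}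
    (hs : IsOrthonormalFrame m s) (huv : IsOrthogonalIsometryPair u v) {b : ℕ → A}
    (hb : ∀ i, ‖b i‖ ≤ 1 / (m + 1)) {K : ℝ} (hK : 0 ≤ K) :
    ‖twistedDerivation m (dyadicFrame s) (dyadicCoframe s) (K • u) (K • v) b‖ ≤
      (m + 1) ^ 2 + 4 * K := by
  have hdiagonal {c : A} (hc : star c * c = 1) :
      ‖diagonalOf m (dyadicFrame s) (dyadicCoframe s) (K • c)‖ ≤ K := by
    rw [diagonalOf_smul, norm_smul, Real.norm_of_nonneg hK]
    exact mul_le_of_le_one_right hK (hs.norm_diagonalOf_le_one hc)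
  refine (norm_add_le_of_le (norm_add_le_of_le hs.norm_derivation_le (hdiagonal huv.right))
    (norm_mul_le_of_le (hs.norm_companion_le_three hb) (hdiagonal huv.left))).trans_eq ?_
  ring

theorem IsOrthogonalIsometryPair.exists_norm_lie_sub_one_le (h : IsOrthogonalIsometryPair u v)
    (hsum : u * star u + v * star v = 1) (m : ℕ) :
    ∃ d x : A, ‖⁅d, x⁆ - 1‖ ≤ 16384 * (m + 1) ^ 5 / 2 ^ m ∧
      ‖d‖ * ‖x‖ ≤ 122880 * (m + 1) ^ 5 := by
  obtain ⟨s, hs⟩ := h.exists_isOrthonormalFrame hsum m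
  obtain ⟨b, hb, hb_last, hdefect⟩ :=
    h.exists_norm_commutatorDefect_succ_le m (η := 1 / 2 ^ m) (by positivity)
  set K : ℝ := 8192 * (m + 1) ^ 5
  have hK0 : 0 ≤ K := by positivity
  have hm1 : (1 : ℝ) ≤ m + 1 := by linarith [m.cast_nonneg (α := ℝ)]
  have hn2 : (m + 1 : ℝ) ^ 2 ≤ (m + 1) ^ 5 := pow_le_pow_right₀ hm1 (by norm_num)
  have hn : (m + 1 : ℝ) ≤ (m + 1) ^ 2 := le_self_pow₀ hm1 two_ne_zero
  have hb_le (i : ℕ) : ‖b i‖ ≤ 1 / (m + 1) :=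
    (hb i).trans (one_div_le_one_div_of_le (by positivity) (by nlinarith))
  have hb_small (i : ℕ) : ‖b i‖ ≤ 1 / 128 :=
    (hb i).trans (one_div_le_one_div_of_le (by norm_num) (by nlinarith))
  have hzero := norm_commutatorDefect_zero_le (m := m) hK0
    (norm_le_one_of_star_mul_self_eq_one h.left) (norm_le_one_of_star_mul_self_eq_one h.right)
    hb_small
  refine ⟨_, _, (hs.norm_lie_twistedDerivation_companion_sub_one_le hb_last hdefect).trans ?_,
    (mul_le_mul (hs.norm_twistedDerivation_smul_le h hb_le hK0) (hs.norm_companion_le_three hb_le)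
      (norm_nonneg _) (by positivity)).trans (by linarith)⟩
  rw [mul_one_div, ← add_div]
  gcongr
  linarith

theorem commutators_close_to_identity_general (h : IsOrthogonalIsometryPair u v)
    (hsum : u * star u + v * star v = 1) :
    ∃ C : ℝ, 0 < C ∧ ∀ ε : ℝ, 0 < ε → ε ≤ 1 / 2 →
      ∃ d x : A, ‖d * x - x * d - 1‖ ≤ ε ∧ ‖d‖ * ‖x‖ ≤ C * Real.log (1 / ε) ^ 5 := by
  obtain ⟨C, hC, hdyadic⟩ := exists_nat_mul_pow_div_two_pow_le (c := 16384) (by norm_num) 5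
  refine ⟨122880 * C ^ 5, by positivity, fun ε hε hε' => ?_⟩
  obtain ⟨m, herror, hm⟩ := hdyadic ε hε hε'
  obtain ⟨d, x, hlie, hnorm⟩ := h.exists_norm_lie_sub_one_le hsum m
  refine ⟨d, x, hlie.trans herror, hnorm.trans ?_⟩
  rw [mul_assoc, ← mul_pow]
  gcongr

end Assembly

/-- **Commutators close to the identity in unital C*-algebras.** Let `A` be a unital C*-algebra
containing elements `u, v` with `u*u = v*v = uu* + vv* = 1` and `u*v = v*u = 0`.  Then there is
a constant `C > 0` such that for every `0 < ε ≤ 1/2` there exist `d, x ∈ A` with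
`‖[d, x] - 1‖ ≤ ε` and `‖d‖ ‖x‖ ≤ C (log (1/ε))⁵`. -/
theorem commutators_close_to_identity
    {A : Type*} [NormedRing A] [StarRing A] [CStarRing A]
    [NormedAlgebra ℂ A] [StarModule ℂ A] [CompleteSpace A]
    (u v : A)
    (huu : star u * u = 1) (hvv : star v * v = 1)
    (hsum : u * star u + v * star v = 1)
    (huv : star u * v = 0) (hvu : star v * u = 0) :
    ∃ C : ℝ, 0 < C ∧ ∀ ε : ℝ, 0 < ε → ε ≤ 1 / 2 →
      ∃ d x : A, ‖d * x - x * d - 1‖ ≤ ε ∧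
        ‖d‖ * ‖x‖ ≤ C * Real.log (1 / ε) ^ 5 :=
  commutators_close_to_identity_general ⟨huu, hvv, huv⟩ hsum
end
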